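/- Let T be a finite tree rooted at R and let S ⊆ V(T) with R ∈ S. Suppose that every vertex of S lies at even distance from R if and only if it belongs to a set S_A ⊆ S, and let S_B = S \ S_A. If additionally S contains, for each component C of T − S, all vertices of C adjacent in T to vertices of S at the 'wrong parity' side, then one may enlarge S to a set S' with |S'| ≤ 3|S| such that no component of T − S' has edges to both S'_A and S'_B, where S'_A (resp. S'_B) are the vertices of S' at even (resp. odd) distance from R. -/

import Mathlib

open SimpleGraph
open scoped Classical

theorem parent_unique {V : Type*} (G : SimpleGraph V) (hG : G.IsTree) (R u w v : V)
    (hu : G.Adj u v) (hw : G.Adj w v) (du : G.dist R v = G.dist R u + 1)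
    (dw : G.dist R v = G.dist R w + 1) : u = w := by
  obtain ⟨p, hp, hp'⟩ := hG.connected.exists_path_of_dist R u
  obtain ⟨q, hq, hq'⟩ := hG.connected.exists_path_of_dist R w
  have h1 : (p.concat hu).IsPath :=
    Walk.isPath_of_length_eq_dist _ (by rw [Walk.length_concat, hp', du])
  have h2 : (q.concat hw).IsPath :=
    Walk.isPath_of_length_eq_dist _ (by rw [Walk.length_concat, hq', dw])
  have h3 := (hG.existsUnique_path R v).unique h1 h2
  have h4 := congrArg Walk.penultimate h3
  simpa using h4

theorem exists_parent {V : Type*} (G : SimpleGraph V) (hG : G.IsTree) (R : V) :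
    ∃ p : V → V, ∀ u v, G.Adj u v → G.dist R v = G.dist R u + 1 → p v = u := by
  have : ∀ v, ∃ w, ∀ u, G.Adj u v → G.dist R v = G.dist R u + 1 → w = u := by
    intro v
    by_cases h : ∃ w, G.Adj w v ∧ G.dist R v = G.dist R w + 1
    · obtain ⟨w, h1, h2⟩ := h
      exact ⟨w, fun u h3 h4 => parent_unique G hG R w u v h1 h3 h2 h4⟩
    · exact ⟨v, fun u h3 h4 => absurd ⟨u, h3, h4⟩ h⟩
  choose p hp using this
  exact ⟨p, fun u v => hp v u⟩

theorem exists_colour {V : Type*} (d : V → ℕ) (p : V → V) (S : Finset V) :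
    ∃ f : V → Prop, (∀ v ∈ S, (f v ↔ Even (d v))) ∧
      ∀ v, v ∉ S → d (p v) < d v → (f v ↔ f (p v)) := by
  let F : (v : V) → ((u : V) → d u < d v → Prop) → Prop := fun v rec =>
    if v ∈ S then Even (d v) else if h : d (p v) < d v then rec (p v) h else True
  let wf : WellFounded (fun u v : V => d u < d v) := (measure d).wf
  refine ⟨wf.fix F, fun v hv => ?_, fun v hv h => ?_⟩
  · rw [wf.fix_eq]; simp [F, hv]
  · rw [wf.fix_eq]; simp [F, hv, h]

theorem stmt_7 {V : Type*} [Fintype V] (G : SimpleGraph V)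
    (hG : G.IsTree) (R : V)
    (S S_A S_B : Finset V) (hR : R ∈ S)
    (hSA : S_A ⊆ S)
    (hpar : ∀ s ∈ S, (Even (G.dist R s) ↔ s ∈ S_A))
    (hSB : S_B = S \ S_A) :
    ∃ S' : Finset V, S ⊆ S' ∧ S'.card ≤ 3 * S.card ∧
      ∀ c : (G.induce (↑S' : Set V)ᶜ).ConnectedComponent,
        ¬ ((∃ v ∈ c.supp, ∃ a ∈ S', Even (G.dist R a) ∧ G.Adj ↑v a) ∧
           (∃ v ∈ c.supp, ∃ b ∈ S', Odd (G.dist R b) ∧ G.Adj ↑v b)) := by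
  obtain ⟨p, hp⟩ := exists_parent G hG R
  obtain ⟨f, hf1, hf2⟩ := exists_colour (G.dist R) p S
  let B := S.filter fun s => G.dist R s = G.dist R (p s) + 1 ∧ ¬ (f (p s) ↔ Even (G.dist R s))
  have hf3 : ∀ u v, G.Adj u v → G.dist R v = G.dist R u + 1 → v ∉ S → (f v ↔ f u) := by
    intro u v h h' hv
    have := hp u v h h'
    have h2 := hf2 v hv (by rw [this]; omega)
    rwa [this] at h2
  have hS' : ∀ a ∈ S ∪ B.image p, (f a ↔ Even (G.dist R a)) := by
    intro a ha
    rcases Finset.mem_union.1 ha with h | h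
    · exact hf1 a h
    · obtain ⟨s, hs, rfl⟩ := Finset.mem_image.1 h
      obtain ⟨_, h1, h2⟩ := Finset.mem_filter.1 hs
      rw [h1, Nat.even_add_one] at h2
      tauto
  have key : ∀ v a, v ∉ S ∪ B.image p → a ∈ S ∪ B.image p → G.Adj v a →
      (f v ↔ Even (G.dist R a)) := by
    intro v a hv ha h
    have hvS : v ∉ S := fun h => hv (Finset.mem_union_left _ h)
    rcases hG.dist_eq_dist_add_one_of_adj R h with h1 | h1
    · rw [hf3 a v h.symm h1 hvS, hS' a ha]
    · by_cases haS : a ∈ S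
      · by_contra hne
        have hpa := hp v a h h1
        refine hv (Finset.mem_union_right _ (Finset.mem_image.2 ⟨a, ?_, hpa⟩))
        exact Finset.mem_filter.2 ⟨haS, by rw [hpa]; exact h1, by rw [hpa]; exact hne⟩
      · rw [← hf3 v a h h1 haS, hS' a ha]
  refine ⟨S ∪ B.image p, Finset.subset_union_left, ?_, ?_⟩
  · have h1 := Finset.card_union_le S (B.image p)
    have h2 : (B.image p).card ≤ B.card := Finset.card_image_le
    have h3 : B.card ≤ S.card := Finset.card_filter_le _ _
    omega
  · rintro c ⟨⟨v, hv, a, ha, hae, hva⟩, ⟨w, hw, b, hb, hbo, hwb⟩⟩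
    have hr : (G.induce (↑(S ∪ B.image p) : Set V)ᶜ).Reachable v w :=
      ConnectedComponent.exact (hv.trans hw.symm)
    have hconst : ∀ x y, (G.induce (↑(S ∪ B.image p) : Set V)ᶜ).Walk x y →
        (f x ↔ f y) := by
      intro x y q
      induction q with
      | nil => rfl
      | @cons x y z h q ih =>
        refine Iff.trans ?_ ih
        have hadj : G.Adj x y := h
        have hx : (x : V) ∉ S := fun h => x.2 (Finset.mem_coe.2 (Finset.mem_union_left _ h))
        have hy : (y : V) ∉ S := fun h => y.2 (Finset.mem_coe.2 (Finset.mem_union_left _ h))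
        rcases hG.dist_eq_dist_add_one_of_adj R hadj with h1 | h1
        · exact hf3 _ _ hadj.symm h1 hx
        · exact (hf3 _ _ hadj h1 hy).symm
    obtain ⟨q⟩ := hr
    have e1 := key v a (fun h => v.2 (Finset.mem_coe.2 h)) ha hva
    have e2 := key w b (fun h => w.2 (Finset.mem_coe.2 h)) hb hwb
    have e3 := hconst v w q
    rw [← Nat.not_even_iff_odd] at hbo
    tauto
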